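/- arXiv:2309.12621 — 8 statements merged into one kernel-verified Lean document; each statement's English description precedes it below -/
import Mathlib

section
/- Let R be a ring and let M ≤ F be right R-modules. The following conditions are equivalent: (a) M is dense in F and F is a maximal dense extension of M, i.e. whenever F ≤ F' with M dense in F', one has F = F'; (b) F is rationally complete and M is dense in F; (c) F is rationally complete, M is essential in F, and F is minimal with this property, i.e. every rationally complete module F' with M ≤ F' ≤ F equals F. Moreover, a module F satisfying any of these equivalent conditions is (isomorphic over M to) the rational hull Ẽ(M) of M. -/
/- Right `R`-modules are rendered as left `R`-modules (i.e. we work over the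
opposite ring), so "`x·r`" becomes "`r • x`". -/

universe u

/-- `N` is a dense submodule of `M`. -/
def IsDenseSub (R : Type*) [Ring R] {M : Type*} [AddCommGroup M] [Module R M]
    (N : Submodule R M) : Prop :=
  ∀ (x y : M), y ≠ 0 → ∃ r : R, r • x ∈ N ∧ r • y ≠ 0

/-- `M` is rationally complete: it has no proper dense extension. -/
def RationallyComplete (R : Type u) [Ring R] (M : Type u) [AddCommGroup M] [Module R M] : Prop :=
  ∀ (V : Type u) [AddCommGroup V] [Module R V] (f : M →ₗ[R] V),
    Function.Injective f → IsDenseSub R (LinearMap.range f) → Function.Surjective f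

/-- The rational hull of `M` computed inside `E`. -/
def ratHull (R : Type*) [Ring R] (E : Type*) [AddCommGroup E] [Module R E]
    (M : Submodule R E) : Submodule R E where
  carrier := {x | ∀ ϑ : E →ₗ[R] E, (∀ m ∈ M, ϑ m = 0) → ϑ x = 0}
  add_mem' := by
    intro a b ha hb ϑ h
    simp only [Set.mem_setOf_eq] at *
    rw [map_add, ha ϑ h, hb ϑ h, add_zero]
  zero_mem' := by
    intro ϑ _
    exact map_zero ϑ
  smul_mem' := by
    intro r x hx ϑ h
    simp only [Set.mem_setOf_eq] at *
    rw [map_smul, hx ϑ h, smul_zero]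

/-! When `N ≤ V ≤ E` with `E` injective and `V` essential in `E`, the submodule `N` is dense in `V`
exactly when `V ≤ Ẽ(N)`. Indeed, if `x` and `y ≠ 0` in `E` violate density, i.e. `r • y = 0`
whenever `r • x ∈ N`, then `x + N ↦ y` extends to a map `E ⧸ N → E`, so `x ∉ Ẽ(N)`. As density is
transitive, `Ẽ(N)` is rationally complete when `E = E(N)`, and a rationally complete module between
`N` and `Ẽ(N)` is all of `Ẽ(N)`.

For (c) → (b), embed `F` in `E(M)` over `M`. Completeness gives `F = Ẽ(F) ⊇ Ẽ(M)`, and minimality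
of `F` forces `F = Ẽ(M)`. -/

open Function LinearMap Submodule

section Essential

variable {R M V E : Type*} [Ring R] [AddCommGroup M] [Module R M] [AddCommGroup V] [Module R V]
  [AddCommGroup E] [Module R E]

/-- `N` is an essential submodule of `V`, phrased as in condition (c): every submodule meeting `N`
trivially is zero. It provides the embeddings of essential extensions of `M` into `E(M)`. -/
def IsEssentialSub (N : Submodule R V) : Prop :=
  ∀ K : Submodule R V, K ⊓ N = ⊥ → K = ⊥

namespace IsEssentialSub

theorem mono {N N' : Submodule R V} (hN : IsEssentialSub N) (h : N ≤ N') : IsEssentialSub N' :=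
  fun K hK ↦ hN K (le_bot_iff.mp (hK ▸ inf_le_inf_left K h))

theorem exists_smul_mem_smul_ne_zero {N : Submodule R V} (hN : IsEssentialSub N) {y : V}
    (hy : y ≠ 0) : ∃ r : R, r • y ∈ N ∧ r • y ≠ 0 := by
  have hne : span R {y} ⊓ N ≠ ⊥ := fun h ↦ hy (span_singleton_eq_bot.mp (hN _ h))
  obtain ⟨z, ⟨hzy, hzN⟩, hz⟩ := exists_mem_ne_zero_of_ne_bot hne
  obtain ⟨r, rfl⟩ := mem_span_singleton.mp hzy
  exact ⟨r, hzN, hz⟩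

theorem injective_of_comp {f : M →ₗ[R] V} (hf : IsEssentialSub (range f)) {g : V →ₗ[R] E}
    (hgf : Injective (g ∘ₗ f)) : Injective g := by
  refine ker_eq_bot.mp (hf _ ((Submodule.eq_bot_iff _).mpr ?_))
  rintro _ ⟨hg, m, rfl⟩
  rw [(map_eq_zero_iff (g ∘ₗ f) hgf).mp hg, map_zero]

end IsEssentialSub

end Essential

theorem IsEssentialSub.exists_injective_extension {R : Type*} [Ring R] {M V E : Type u}
    [AddCommGroup M] [Module R M] [AddCommGroup V] [Module R V] [AddCommGroup E] [Module R E]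
    [Module.Injective R E] {f : M →ₗ[R] V} (hf : Injective f) (hess : IsEssentialSub (range f))
    {e : M →ₗ[R] E} (he : Injective e) :
    ∃ g : V →ₗ[R] E, Injective g ∧ g ∘ₗ f = e := by
  obtain ⟨g, hg⟩ := Module.Injective.out f hf e
  obtain rfl : g ∘ₗ f = e := LinearMap.ext hg
  exact ⟨g, hess.injective_of_comp he, rfl⟩

section Dense

variable {R V W E : Type*} [Ring R] [AddCommGroup V] [Module R V] [AddCommGroup W] [Module R W]
  [AddCommGroup E] [Module R E]

namespace IsDenseSub

theorem mono {N N' : Submodule R V} (hN : IsDenseSub R N) (h : N ≤ N') : IsDenseSub R N' :=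
  fun x y hy ↦ (hN x y hy).imp fun _ hr ↦ ⟨h hr.1, hr.2⟩

theorem isEssentialSub {N : Submodule R V} (hN : IsDenseSub R N) : IsEssentialSub N := by
  intro K hK
  by_contra hne
  obtain ⟨y, hyK, hy⟩ := exists_mem_ne_zero_of_ne_bot hne
  obtain ⟨r, hrN, hr⟩ := hN y y hy
  exact hr ((Submodule.eq_bot_iff _).mp hK _ ⟨K.smul_mem r hyK, hrN⟩)

theorem map_of_range {N : Submodule R V} (hN : IsDenseSub R N) {f : V →ₗ[R] W} (hf : Injective f)
    (hrange : IsDenseSub R (range f)) : IsDenseSub R (N.map f) := by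
  intro x y hy
  obtain ⟨r, ⟨a, ha⟩, hr⟩ := hrange x y hy
  obtain ⟨s, ⟨b, hb⟩, hs⟩ := hrange.isEssentialSub.exists_smul_mem_smul_ne_zero hr
  have hb0 : f b ≠ 0 := hb ▸ hs
  obtain ⟨t, htN, ht⟩ := hN (s • a) b (ne_zero_of_map hb0)
  refine ⟨t * s * r, ⟨t • s • a, htN, ?_⟩, ?_⟩
  · simp only [map_smul, ha, mul_smul]
  · rwa [mul_smul, mul_smul, ← hb, ← map_smul, map_ne_zero_iff f hf]

end IsDenseSub

theorem le_ratHull (N : Submodule R E) : N ≤ ratHull R E N :=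
  fun x hx _ hϑ ↦ hϑ x hx

theorem ratHull_mono {N N' : Submodule R E} (h : N ≤ N') : ratHull R E N ≤ ratHull R E N' :=
  fun _ hx ϑ hϑ ↦ hx ϑ fun m hm ↦ hϑ m (h hm)

theorem mem_ratHull_of_forall_exists_smul {N : Submodule R E} {x : E}
    (h : ∀ y : E, y ≠ 0 → ∃ r : R, r • x ∈ N ∧ r • y ≠ 0) : x ∈ ratHull R E N := by
  intro ϑ hϑ
  by_contra hne
  obtain ⟨r, hrN, hr⟩ := h (ϑ x) hne
  exact hr (by rw [← map_smul, hϑ _ hrN])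

theorem exists_smul_mem_smul_ne_zero_of_mem_ratHull [Module.Injective R E] {N : Submodule R E}
    {x y : E} (hx : x ∈ ratHull R E N) (hy : y ≠ 0) : ∃ r : R, r • x ∈ N ∧ r • y ≠ 0 := by
  by_contra! hann
  let f := LinearPMap.mkSpanSingleton' (σ := RingHom.id R) (N.mkQ x) y fun r hr ↦
    hann r ((Quotient.mk_eq_zero N).mp hr)
  obtain ⟨g, hg⟩ := Module.Injective.out f.domain.subtype f.domain.subtype_injective f.toFun
  have hgx : g (N.mkQ x) = y :=
    (hg ⟨N.mkQ x, mem_span_singleton_self _⟩).trans (LinearPMap.mkSpanSingleton'_apply_self ..)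
  have hgN : ∀ m ∈ N, (g ∘ₗ N.mkQ) m = 0 := fun m hm ↦ by
    rw [LinearMap.comp_apply, mkQ_apply, (Quotient.mk_eq_zero N).mpr hm, map_zero]
  exact hy (hgx.symm.trans (hx _ hgN))

theorem IsDenseSub.range_le_ratHull {N : Submodule R V} (hN : IsDenseSub R N) {ι : V →ₗ[R] E}
    (hι : Injective ι) (hess : IsEssentialSub (range ι)) : range ι ≤ ratHull R E (N.map ι) := by
  rintro _ ⟨x, rfl⟩
  refine mem_ratHull_of_forall_exists_smul fun y hy ↦ ?_
  obtain ⟨s, ⟨v, hv⟩, hs⟩ := hess.exists_smul_mem_smul_ne_zero hy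
  have hv0 : ι v ≠ 0 := hv ▸ hs
  obtain ⟨r, hrN, hr⟩ := hN (s • x) v (ne_zero_of_map hv0)
  refine ⟨r * s, ?_, ?_⟩
  · rw [mul_smul, ← map_smul, ← map_smul]
    exact mem_map_of_mem hrN
  · rwa [mul_smul, ← hv, ← map_smul, map_ne_zero_iff ι hι]

theorem isDenseSub_of_range_le_ratHull [Module.Injective R E] {N : Submodule R V} {ι : V →ₗ[R] E}
    (hι : Injective ι) (h : range ι ≤ ratHull R E (N.map ι)) : IsDenseSub R N := by
  intro x y hy
  obtain ⟨r, ⟨m, hm, hmx⟩, hr⟩ := exists_smul_mem_smul_ne_zero_of_mem_ratHull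
    (h ⟨x, rfl⟩) ((map_ne_zero_iff ι hι).mpr hy)
  rw [← map_smul] at hmx hr
  exact ⟨r, hι hmx ▸ hm, (map_ne_zero_iff ι hι).mp hr⟩

end Dense

section RationallyComplete

variable {R F A B E : Type u} [Ring R] [AddCommGroup F] [Module R F] [AddCommGroup A] [Module R A]
  [AddCommGroup B] [Module R B] [AddCommGroup E] [Module R E]

theorem rationallyComplete_ratHull [Module.Injective R E] {M : Submodule R E}
    (hM : IsEssentialSub M) : RationallyComplete R (ratHull R E M) := by
  intro V _ _ f hf hd
  obtain ⟨g, hg, hgf⟩ := hd.isEssentialSub.exists_injective_extension hf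
    (ratHull R E M).subtype_injective
  have hMrange : M ≤ range g := fun m hm ↦ ⟨f ⟨m, le_ratHull M hm⟩, LinearMap.congr_fun hgf _⟩
  let N := M.submoduleOf (ratHull R E M)
  have hmap : N.map (ratHull R E M).subtype = M := map_comap_eq_of_le (by
    rw [range_subtype]; exact le_ratHull M)
  have hN : IsDenseSub R N := isDenseSub_of_range_le_ratHull (ratHull R E M).subtype_injective
    (by rw [range_subtype, hmap])
  have hrange : range g ≤ ratHull R E M := by
    have := (hN.map_of_range hf hd).range_le_ratHull hg (hM.mono hMrange)
    rwa [← Submodule.map_comp, hgf, hmap] at this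
  exact fun v ↦ ⟨⟨g v, hrange ⟨v, rfl⟩⟩, hg (LinearMap.congr_fun hgf _)⟩

namespace RationallyComplete

theorem of_linearEquiv (hA : RationallyComplete R A) (i : A ≃ₗ[R] B) : RationallyComplete R B := by
  intro V _ _ f hf hd
  have hrange : range (f ∘ₗ i.toLinearMap) = range f := range_comp_of_range_eq_top f i.range
  exact Surjective.of_comp (g := i) (hA V (f ∘ₗ i) (hf.comp i.injective) (hrange ▸ hd))

theorem eq_top_of_isDenseSub {N : Submodule R F} (hN : RationallyComplete R N)
    (hd : IsDenseSub R N) : N = ⊤ := by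
  rw [← N.range_subtype] at hd ⊢
  exact range_eq_top.mpr (hN F N.subtype N.subtype_injective hd)

theorem range_eq_ratHull [Module.Injective R E] (hF : RationallyComplete R F) {φ : F →ₗ[R] E}
    (hφ : Injective φ) {N : Submodule R E} (hN : N ≤ range φ) (hle : range φ ≤ ratHull R E N) :
    range φ = ratHull R E N := by
  let ψ : F →ₗ[R] ratHull R E N := φ.codRestrict _ fun x ↦ hle ⟨x, rfl⟩
  have hψ : IsDenseSub R (range ψ) := by
    refine isDenseSub_of_range_le_ratHull (ratHull R E N).subtype_injective ?_
    rw [range_subtype, ← range_comp, subtype_comp_codRestrict]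
    exact ratHull_mono hN
  have hsurj : Surjective ψ := hF _ ψ (hφ.codRestrict _) hψ
  refine hle.antisymm fun x hx ↦ ?_
  obtain ⟨a, ha⟩ := hsurj ⟨x, hx⟩
  exact ⟨a, congrArg Subtype.val ha⟩

theorem isDenseSub_of_forall_eq_top [Module.Injective R E] (hF : RationallyComplete R F)
    {M : Submodule R F} {φ : F →ₗ[R] E} (hφ : Injective φ) (hess : IsEssentialSub (M.map φ))
    (hmin : ∀ F' : Submodule R F, M ≤ F' → RationallyComplete R F' → F' = ⊤) :
    IsDenseSub R M := by
  let H := ratHull R E (M.map φ)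
  have hrange : range φ = ratHull R E (range φ) := hF.range_eq_ratHull hφ le_rfl (le_ratHull _)
  have hmap : (H.comap φ).map φ = H :=
    map_comap_eq_of_le ((ratHull_mono map_le_range).trans_eq hrange.symm)
  have hcomplete : RationallyComplete R (H.comap φ) :=
    (hmap.symm ▸ rationallyComplete_ratHull hess : RationallyComplete R ((H.comap φ).map φ))
      |>.of_linearEquiv (equivMapOfInjective φ hφ _).symm
  have htop : H.comap φ = ⊤ := hmin _ (map_le_iff_le_comap.mp (le_ratHull _)) hcomplete
  refine isDenseSub_of_range_le_ratHull hφ ?_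
  rw [range_eq_map, ← htop]
  exact hmap.le

end RationallyComplete

theorem isDenseSub_and_maximal_iff {M : Submodule R F} :
    (IsDenseSub R M ∧
        ∀ (F' : Type u) [AddCommGroup F'] [Module R F'] (j : F →ₗ[R] F'),
          Injective j → IsDenseSub R (M.map j) → Surjective j) ↔
      RationallyComplete R F ∧ IsDenseSub R M where
  mp := fun ⟨hM, hmax⟩ ↦ ⟨fun V _ _ f hf hd ↦ hmax V f hf (hM.map_of_range hf hd), hM⟩
  mpr := fun ⟨hF, hM⟩ ↦ ⟨hM, fun V _ _ j hj hd ↦ hF V j hj (hd.mono map_le_range)⟩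

end RationallyComplete

/-- For modules `M ≤ F`, the following are equivalent:
(a) `M` is dense in `F` and `F` is a maximal dense extension of `M`;
(b) `F` is rationally complete and `M` is dense in `F`;
(c) `F` is rationally complete, `M` is essential in `F`, and `F` is minimal such.
Moreover, such an `F` is isomorphic over `M` to the rational hull `Ẽ(M)` of `M`
(computed inside any injective hull `E` of `M`). -/
theorem stmt0 (R : Type u) [Ring R] (F : Type u) [AddCommGroup F] [Module R F]
    (M : Submodule R F)
    -- an injective hull `E` of `M`
    (E : Type u) [AddCommGroup E] [Module R E] (e : ↥M →ₗ[R] E)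
    (he : Function.Injective e) (hE : Module.Injective R E)
    (hEess : ∀ N : Submodule R E, N ⊓ LinearMap.range e = ⊥ → N = ⊥) :
    -- (a) ↔ (b)
    ((IsDenseSub R M ∧
        ∀ (F' : Type u) [AddCommGroup F'] [Module R F'] (j : F →ₗ[R] F'),
          Function.Injective j → IsDenseSub R (Submodule.map j M) → Function.Surjective j) ↔
      (RationallyComplete R F ∧ IsDenseSub R M)) ∧
    -- (b) ↔ (c)
    ((RationallyComplete R F ∧ IsDenseSub R M) ↔
      (RationallyComplete R F ∧
        (∀ N : Submodule R F, N ⊓ M = ⊥ → N = ⊥) ∧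
        ∀ F' : Submodule R F, M ≤ F' → RationallyComplete R ↥F' → F' = ⊤)) ∧
    -- moreover: any such `F` is isomorphic over `M` to the rational hull of `M`
    ((RationallyComplete R F ∧ IsDenseSub R M) →
      ∃ g : F ≃ₗ[R] ↥(ratHull R E (LinearMap.range e)),
        ∀ m : ↥M, ((g (m : F)) : E) = e m) := by
  have embed (hM : IsEssentialSub M) : ∃ φ : F →ₗ[R] E,
      Function.Injective φ ∧ (∀ m : M, φ m = e m) ∧ M.map φ = LinearMap.range e := by
    rw [← M.range_subtype] at hM
    obtain ⟨φ, hφ, rfl⟩ := hM.exists_injective_extension M.subtype_injective he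
    exact ⟨φ, hφ, fun _ ↦ rfl, by rw [range_comp, range_subtype]⟩
  refine ⟨isDenseSub_and_maximal_iff, ⟨?_, ?_⟩, ?_⟩
  · rintro ⟨hF, hM⟩
    exact ⟨hF, hM.isEssentialSub, fun F' hle hF' ↦ hF'.eq_top_of_isDenseSub (hM.mono hle)⟩
  · rintro ⟨hF, hess, hmin⟩
    obtain ⟨φ, hφ, -, hmap⟩ := embed hess
    exact ⟨hF, hF.isDenseSub_of_forall_eq_top hφ (hmap ▸ hEess) hmin⟩
  · rintro ⟨hF, hM⟩
    obtain ⟨φ, hφ, hext, hmap⟩ := embed hM.isEssentialSub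
    have hle : LinearMap.range e ≤ LinearMap.range φ := hmap ▸ map_le_range
    have hhull : LinearMap.range φ = ratHull R E (LinearMap.range e) :=
      hF.range_eq_ratHull hφ hle (hmap ▸ hM.range_le_ratHull hφ (IsEssentialSub.mono hEess hle))
    exact ⟨(LinearEquiv.ofInjective φ hφ).trans (LinearEquiv.ofEq _ _ hhull), hext⟩
end

section
/- Let M be a right R-module with injective hull E(M). Then Ẽ(M) = {x ∈ E(M) : l_{E(M)}(x⁻¹M) = 0} = {x ∈ E(M) : Hom_R(R/x⁻¹M, E(M)) = 0}, where x⁻¹M = {r ∈ R : xr ∈ M} and l_{E(M)}(I) = {y ∈ E(M) : yI = 0}. -/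
/- An endomorphism of `E` killing `M` is a map `E ⧸ M → E`. The class of `x` has annihilator `x⁻¹M`,
so by injectivity its images under such maps are exactly the `y ∈ E` annihilated by `x⁻¹M`. These
`y` are also the images of `1` under the maps `R ⧸ x⁻¹M → E`. -/

universe u v

section

variable {R : Type u} [Ring R] {E N : Type v} [AddCommGroup E] [Module R E]
  [AddCommGroup N] [Module R N]

theorem exists_linearMap_apply_eq_of_injective (hE : Module.Injective R E) {z : N} {y : E}
    (hzy : ∀ r : R, r • z = 0 → r • y = 0) : ∃ h : N →ₗ[R] E, h z = y := by
  let g : N →ₗ.[R] E := LinearPMap.mkSpanSingleton' z y hzy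
  obtain ⟨h, hg⟩ := hE.out g.domain.subtype g.domain.subtype_injective g.toFun
  have hz : z ∈ g.domain := Submodule.mem_span_singleton_self z
  exact ⟨h, (hg ⟨z, hz⟩).trans (LinearPMap.mkSpanSingleton'_apply_self z y hzy hz)⟩

theorem exists_linearMap_vanishing_apply_eq_of_injective (hE : Module.Injective R E)
    {K : Submodule R N} {x : N} {y : E} (hxy : ∀ r : R, r • x ∈ K → r • y = 0) :
    ∃ ϑ : N →ₗ[R] E, (∀ m ∈ K, ϑ m = 0) ∧ ϑ x = y := by
  have hmk (r : R) (hr : r • K.mkQ x = 0) : r • y = 0 :=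
    hxy r <| (Submodule.Quotient.mk_eq_zero K).mp hr
  obtain ⟨h, hx⟩ := exists_linearMap_apply_eq_of_injective hE hmk
  refine ⟨h ∘ₗ K.mkQ, fun m hm ↦ ?_, hx⟩
  have hm0 : K.mkQ m = 0 := (Submodule.Quotient.mk_eq_zero K).mpr hm
  rw [LinearMap.comp_apply, hm0, map_zero]

theorem forall_quotient_linearMap_eq_zero_iff (I : Ideal R) :
    (∀ f : (R ⧸ I) →ₗ[R] E, f = 0) ↔ ∀ y : E, (∀ r ∈ I, r • y = 0) → y = 0 := by
  constructor
  · intro hI y hy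
    have hf : I.liftQ (LinearMap.toSpanSingleton R E y) hy = 0 := hI _
    calc y = I.liftQ (LinearMap.toSpanSingleton R E y) hy (I.mkQ 1) := (one_smul R y).symm
      _ = 0 := by rw [hf, LinearMap.zero_apply]
  · intro hI f
    have hf1 : f (I.mkQ 1) = 0 := hI _ fun r hr ↦ by
      rw [← map_smul, ← map_smul, smul_eq_mul, mul_one, Submodule.mkQ_apply,
        (Submodule.Quotient.mk_eq_zero I).mpr hr, map_zero]
    exact Submodule.linearMap_qext I (LinearMap.ext_ring hf1)

theorem mem_ratHull_of_forall_smul_eq_zero {M : Submodule R E} {x : E}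
    (hx : ∀ y : E, (∀ r : R, r • x ∈ M → r • y = 0) → y = 0) : x ∈ ratHull R E M :=
  fun ϑ hϑ ↦ hx (ϑ x) fun r hr ↦ by rw [← map_smul, hϑ _ hr]

theorem mem_ratHull_iff_forall_smul_eq_zero (hE : Module.Injective R E) {M : Submodule R E}
    {x : E} :
    x ∈ ratHull R E M ↔ ∀ y : E, (∀ r : R, r • x ∈ M → r • y = 0) → y = 0 := by
  refine ⟨fun hx y hy ↦ ?_, mem_ratHull_of_forall_smul_eq_zero⟩
  obtain ⟨ϑ, hϑ, rfl⟩ := exists_linearMap_vanishing_apply_eq_of_injective hE hy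
  exact hx ϑ hϑ

end

theorem stmt5_general (R : Type*) [Ring R] (E : Type*) [AddCommGroup E] [Module R E]
    (M : Submodule R E) (hE : Module.Injective R E) :
    (ratHull R E M : Set E) =
      {x : E | ∀ y : E, (∀ r : R, r • x ∈ M → r • y = 0) → y = 0} ∧
    (ratHull R E M : Set E) =
      {x : E |
        ∀ f : (R ⧸ Submodule.comap (LinearMap.toSpanSingleton R E x) M) →ₗ[R] E, f = 0} := by
  have hann : (ratHull R E M : Set E) =
      {x : E | ∀ y : E, (∀ r : R, r • x ∈ M → r • y = 0) → y = 0} :=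
    Set.ext fun _ ↦ mem_ratHull_iff_forall_smul_eq_zero hE
  exact ⟨hann, hann.trans <| Set.ext fun x ↦ (forall_quotient_linearMap_eq_zero_iff
    (M.comap (LinearMap.toSpanSingleton R E x))).symm⟩

/-- If `E` is an injective hull of `M`, then
`Ẽ(M) = {x ∈ E : l_E(x⁻¹M) = 0} = {x ∈ E : Hom_R(R/x⁻¹M, E) = 0}`,
where `x⁻¹M = {r : r • x ∈ M}`. -/
theorem stmt5 (R : Type*) [Ring R] (E : Type*) [AddCommGroup E] [Module R E]
    (M : Submodule R E) (hE : Module.Injective R E)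
    (hess : ∀ N : Submodule R E, N ⊓ M = ⊥ → N = ⊥) :
    (ratHull R E M : Set E) =
      {x : E | ∀ y : E, (∀ r : R, r • x ∈ M → r • y = 0) → y = 0} ∧
    (ratHull R E M : Set E) =
      {x : E |
        ∀ f : (R ⧸ Submodule.comap (LinearMap.toSpanSingleton R E x) M) →ₗ[R] E, f = 0} :=
  stmt5_general R E M hE
end

section
/- If M is a quasi-continuous right R-module, then its rational hull Ẽ(M) is a quasi-continuous right R-module. -/
theorem mem_ratHull_iff {R E : Type*} [Ring R] [AddCommGroup E] [Module R E]
    {M : Submodule R E} {x : E} :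
    x ∈ ratHull R E M ↔ ∀ ϑ : Module.End R E, M ≤ LinearMap.ker ϑ → x ∈ LinearMap.ker ϑ :=
  Iff.rfl

theorem stmt10_general {R E : Type*} [Ring R] [AddCommGroup E] [Module R E]
    {M : Submodule R E} {f : Module.End R E} (hf : M ≤ M.comap f) :
    ratHull R E M ≤ (ratHull R E M).comap f := by
  intro x hx
  rw [Submodule.mem_comap, mem_ratHull_iff]
  intro ϑ hϑ
  have hcomp : M ≤ LinearMap.ker (ϑ ∘ₗ f) :=
    hf.trans (Submodule.comap_mono hϑ)
  exact mem_ratHull_iff.mp hx (ϑ ∘ₗ f) hcomp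

/-- Let `E` be an injective hull of `M ≤ E` (then `E` is also
an injective hull of `Ẽ(M)`). If `M` is quasi-continuous, i.e. `f(M) ⊆ M` for
every idempotent `f ∈ End_R(E)`, then `Ẽ(M)` is quasi-continuous. -/
theorem stmt10 (R : Type*) [Ring R] (E : Type*) [AddCommGroup E] [Module R E]
    (M : Submodule R E) (hE : Module.Injective R E)
    (hess : ∀ N : Submodule R E, N ⊓ M = ⊥ → N = ⊥)
    (hqc : ∀ f : E →ₗ[R] E, f ∘ₗ f = f → ∀ m ∈ M, f m ∈ M) :
    ∀ f : E →ₗ[R] E, f ∘ₗ f = f → ∀ x ∈ ratHull R E M, f x ∈ ratHull R E M := by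
  intro f hf
  exact stmt10_general (hqc f hf)
end

section
/- If M is a quasi-injective right R-module, then its rational hull Ẽ(M) is a quasi-injective right R-module. -/
theorem ratHull_le_comap_ratHull {R : Type*} [Ring R] {E : Type*} [AddCommGroup E] [Module R E]
    {M N : Submodule R E} {ϑ : E →ₗ[R] E} (hϑ : M ≤ N.comap ϑ) :
    ratHull R E M ≤ (ratHull R E N).comap ϑ := by
  intro x hx ψ hψ
  have comp_eq_zero : ∀ m ∈ M, (ψ ∘ₗ ϑ) m = 0 := fun m hm => hψ (ϑ m) (hϑ hm)
  exact hx (ψ ∘ₗ ϑ) comp_eq_zero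

theorem stmt11_general {R : Type*} [Ring R] {E : Type*} [AddCommGroup E] [Module R E]
    {M : Submodule R E} {ϑ : E →ₗ[R] E} (hϑ : ∀ m ∈ M, ϑ m ∈ M) :
    ∀ x ∈ ratHull R E M, ϑ x ∈ ratHull R E M :=
  ratHull_le_comap_ratHull hϑ

/-- Let `E` be an injective hull of `M ≤ E` (then `E` is also
an injective hull of `Ẽ(M)`). If `M` is quasi-injective, i.e. `ϑ(M) ⊆ M` for
every `ϑ ∈ End_R(E)`, then `Ẽ(M)` is quasi-injective. -/
theorem stmt11 (R : Type*) [Ring R] (E : Type*) [AddCommGroup E] [Module R E]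
    (M : Submodule R E) (hE : Module.Injective R E)
    (hess : ∀ N : Submodule R E, N ⊓ M = ⊥ → N = ⊥)
    (hqi : ∀ ϑ : E →ₗ[R] E, ∀ m ∈ M, ϑ m ∈ M) :
    ∀ ϑ : E →ₗ[R] E, ∀ x ∈ ratHull R E M, ϑ x ∈ ratHull R E M := by
  exact fun ϑ => stmt11_general (hqi ϑ)
end

section
/- Let M = ⊕_{k∈Λ} M_k be a direct sum of right R-modules M_k. If either R is right noetherian or Λ is a finite index set, then Ẽ(M) ⊆ ⊕_{k∈Λ} Ẽ(M_k), where both sides are computed inside E(M) = ⊕_{k∈Λ} E(M_k). -/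
/- Right `R`-modules are rendered as left `R`-modules (i.e. we work over the
opposite ring), so "`x·r`" becomes "`r • x`" and "right noetherian" becomes
`IsNoetherianRing R`. -/

universe u

/-!
Let `ι k` and `π k` be the injection and the projection of the summand `E k` of `⨁ k, E k`. An
endomorphism `θ` of `E k` extends to the endomorphism `ι k ∘ θ ∘ π k` of the direct sum, which kills
`⨁ k, M k` as soon as `θ` kills `M k`. Evaluating it on an element `x` of the rational hull of
`⨁ k, M k` gives `θ (x k) = 0`, so every component `x k` lies in the rational hull of `M k`.
-/

theorem map_ratHull_le {R E F : Type*} [Ring R] [AddCommGroup E] [Module R E]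
    [AddCommGroup F] [Module R F] {M : Submodule R E} {N : Submodule R F}
    {p : E →ₗ[R] F} {i : F →ₗ[R] E}
    (hi : Function.Injective i) (hp : M.map p ≤ N) :
    (ratHull R E M).map p ≤ ratHull R F N := by
  rintro _ ⟨x, hx, rfl⟩ θ hθ
  have kills_M : ∀ m ∈ M, (i ∘ₗ θ ∘ₗ p) m = 0 := fun m hm => by
    rw [LinearMap.comp_apply, LinearMap.comp_apply,
      hθ (p m) (hp (Submodule.mem_map_of_mem hm)), map_zero]
  exact (map_eq_zero_iff i hi).mp (hx (i ∘ₗ θ ∘ₗ p) kills_M)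

theorem mem_iSup_map_lof_iff {R ι : Type*} [Semiring R] [DecidableEq ι] {E : ι → Type*}
    [∀ i, AddCommMonoid (E i)] [∀ i, Module R (E i)] {N : ∀ i, Submodule R (E i)}
    {x : DirectSum ι E} :
    x ∈ ⨆ i, (N i).map (DirectSum.lof R ι E i) ↔ ∀ i, x i ∈ N i := by
  classical
  constructor
  · intro hx i
    have components_mem : ⨆ j, (N j).map (DirectSum.lof R ι E j) ≤
        (N i).comap (DirectSum.component R ι E i) := by
      refine iSup_le fun j => ?_
      rintro _ ⟨y, hy, rfl⟩
      rw [Submodule.mem_comap, DirectSum.component.of]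
      split_ifs with hji
      · subst hji
        exact hy
      · exact zero_mem _
    exact components_mem hx
  · intro hx
    rw [← DirectSum.sum_support_of x]
    exact Submodule.sum_mem _ fun i _ =>
      Submodule.mem_iSup_of_mem i (Submodule.mem_map_of_mem (hx i))

theorem stmt12_general {R Λ : Type*} [Ring R] [DecidableEq Λ] {E : Λ → Type*}
    [∀ k, AddCommGroup (E k)] [∀ k, Module R (E k)] (M : ∀ k, Submodule R (E k)) :
    ratHull R (DirectSum Λ E) (⨆ k, Submodule.map (DirectSum.lof R Λ E k) (M k)) ≤
      ⨆ k, Submodule.map (DirectSum.lof R Λ E k) (ratHull R (E k) (M k)) := by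
  refine fun x hx => mem_iSup_map_lof_iff.mpr fun k => ?_
  have map_component_le :
      (⨆ j, (M j).map (DirectSum.lof R Λ E j)).map (DirectSum.component R Λ E k) ≤ M k :=
    Submodule.map_le_iff_le_comap.mpr fun _ hm => mem_iSup_map_lof_iff.mp hm k
  have lof_injective : Function.Injective (DirectSum.lof R Λ E k) :=
    DirectSum.of_injective k
  exact map_ratHull_le lof_injective map_component_le (Submodule.mem_map_of_mem hx)

/-- For each `k` let `E k` be an injective hull of
`M k ≤ E k`, and suppose `R` is noetherian or `Λ` is finite (so that
`⨁ k, E k` is an injective hull of `⨁ k, M k`). Then the rational hull of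
`⨁ k, M k`, computed inside `⨁ k, E k`, is contained in `⨁ k, Ẽ(M k)`. -/
theorem stmt12 (R : Type u) [Ring R] (Λ : Type u) [DecidableEq Λ]
    (E : Λ → Type u) [∀ k, AddCommGroup (E k)] [∀ k, Module R (E k)]
    (M : ∀ k, Submodule R (E k))
    (hinj : ∀ k, Module.Injective R (E k))
    (hess : ∀ k, ∀ N : Submodule R (E k), N ⊓ M k = ⊥ → N = ⊥)
    (hyp : IsNoetherianRing R ∨ Finite Λ) :
    ratHull R (DirectSum Λ E) (⨆ k, Submodule.map (DirectSum.lof R Λ E k) (M k)) ≤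
      ⨆ k, Submodule.map (DirectSum.lof R Λ E k) (ratHull R (E k) (M k)) :=
  stmt12_general M
end

section
/- Let Λ be any index set and for each i ∈ Λ let N_i ≤ M_i be right R-modules. Set N = ⊕_{k∈Λ} N_k and M = ⊕_{k∈Λ} M_k. Then N is a dense submodule of M if and only if N_i is M_j-dense in M_i for all i, j ∈ Λ. -/
/- Right `R`-modules are rendered as left `R`-modules (i.e. we work over the
opposite ring), so "`x·r`" becomes "`r • x`". -/

/-- `N ≤ M` is `K`-dense in `M`. -/
def IsRelDense (R : Type*) [Ring R] (K : Type*) [AddCommGroup K] [Module R K]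
    {M : Type*} [AddCommGroup M] [Module R M] (N : Submodule R M) : Prop :=
  ∀ (m : M) (x : K), x ≠ 0 → ∃ r : R, r • m ∈ N ∧ r • x ≠ 0

open scoped DirectSum

section Membership

variable {R Λ : Type*} [Semiring R] [DecidableEq Λ] {M : Λ → Type*}
  [∀ i, AddCommMonoid (M i)] [∀ i, Module R (M i)] (N : ∀ i, Submodule R (M i))

theorem iSup_map_lof_le_comap_component (i : Λ) :
    ⨆ k, (N k).map (DirectSum.lof R Λ M k) ≤ (N i).comap (DirectSum.component R Λ M i) := by
  refine iSup_le fun k => Submodule.map_le_iff_le_comap.mpr fun n hn => ?_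
  rw [Submodule.mem_comap, Submodule.mem_comap]
  obtain rfl | hki := eq_or_ne k i
  · rwa [DirectSum.component.lof_self]
  · rw [DirectSum.component.of, dif_neg hki]
    exact zero_mem _

theorem mem_iSup_map_lof_iff_s14 {z : ⨁ k, M k} :
    z ∈ ⨆ k, (N k).map (DirectSum.lof R Λ M k) ↔ ∀ i, z i ∈ N i := by
  classical
  refine ⟨fun hz i => iSup_map_lof_le_comap_component N i hz, fun hz => ?_⟩
  rw [← DirectSum.sum_support_of z]
  exact Submodule.sum_mem _ fun i _ =>
    Submodule.mem_iSup_of_mem i (Submodule.mem_map_of_mem (hz i))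

theorem comap_lof_iSup_map_lof (i : Λ) :
    (⨆ k, (N k).map (DirectSum.lof R Λ M k)).comap (DirectSum.lof R Λ M i) = N i := by
  refine le_antisymm (fun m hm => ?_) fun m hm =>
    Submodule.mem_iSup_of_mem i (Submodule.mem_map_of_mem hm)
  simpa only [Submodule.mem_comap, DirectSum.component.lof_self] using
    iSup_map_lof_le_comap_component N i hm

end Membership

section RelDense

variable {R : Type*} [Ring R] {K : Type*} [AddCommGroup K] [Module R K]

theorem isDenseSub_iff_isRelDense {M : Type*} [AddCommGroup M] [Module R M]
    {N : Submodule R M} : IsDenseSub R N ↔ IsRelDense R M N :=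
  Iff.rfl

namespace IsRelDense

theorem of_injective {K' M : Type*} [AddCommGroup K'] [Module R K'] [AddCommGroup M]
    [Module R M] {N : Submodule R M} (hN : IsRelDense R K N) {f : K' →ₗ[R] K}
    (hf : Function.Injective f) : IsRelDense R K' N := by
  intro m x hx
  obtain ⟨r, hrm, hrx⟩ := hN m (f x) ((map_ne_zero_iff f hf).mpr hx)
  exact ⟨r, hrm, (map_ne_zero_iff f hf).mp (by rwa [map_smul])⟩

theorem comap {M M' : Type*} [AddCommGroup M] [Module R M] [AddCommGroup M'] [Module R M']
    {N : Submodule R M} (hN : IsRelDense R K N) (f : M' →ₗ[R] M) :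
    IsRelDense R K (N.comap f) := by
  intro m x hx
  obtain ⟨r, hrm, hrx⟩ := hN (f m) x hx
  exact ⟨r, by rwa [Submodule.mem_comap, map_smul], hrx⟩

theorem exists_forall_mem_finset {ι : Type*} {M : ι → Type*} [∀ i, AddCommGroup (M i)]
    [∀ i, Module R (M i)] {N : ∀ i, Submodule R (M i)} {s : Finset ι}
    (hN : ∀ i ∈ s, IsRelDense R K (N i)) (m : ∀ i, M i) {x : K} (hx : x ≠ 0) :
    ∃ r : R, (∀ i ∈ s, r • m i ∈ N i) ∧ r • x ≠ 0 := by
  induction s using Finset.cons_induction with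
  | empty => exact ⟨1, by simp, by rwa [one_smul]⟩
  | cons a s ha ih =>
    rw [Finset.forall_mem_cons] at hN
    obtain ⟨r, hrm, hrx⟩ := ih hN.2
    -- Density is applied to `r • m a` and `r • x`, so that multiplying by `t` adds the
    -- condition at `a` without losing those already achieved by `r`.
    obtain ⟨t, htm, htx⟩ := hN.1 (r • m a) (r • x) hrx
    refine ⟨t * r, ?_, by rwa [mul_smul]⟩
    simp only [Finset.forall_mem_cons, mul_smul]
    exact ⟨htm, fun i hi => (N i).smul_mem t (hrm i hi)⟩

end IsRelDense

theorem isRelDense_directSum_iff {Γ : Type*} {L : Γ → Type*} [∀ j, AddCommGroup (L j)]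
    [∀ j, Module R (L j)] {M : Type*} [AddCommGroup M] [Module R M] {N : Submodule R M} :
    IsRelDense R (⨁ j, L j) N ↔ ∀ j, IsRelDense R (L j) N := by
  classical
  refine ⟨fun hN j => hN.of_injective (f := DirectSum.lof R Γ L j) (DirectSum.of_injective j),
    fun hN m x hx => ?_⟩
  obtain ⟨j, hxj⟩ : ∃ j, x j ≠ 0 := DFinsupp.ne_iff.mp hx
  obtain ⟨r, hrm, hrx⟩ := hN j m (x j) hxj
  exact ⟨r, hrm, DFinsupp.ne_iff.mpr ⟨j, hrx⟩⟩

theorem isRelDense_iSup_map_lof_iff {Λ : Type*} [DecidableEq Λ] {M : Λ → Type*}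
    [∀ i, AddCommGroup (M i)] [∀ i, Module R (M i)] {N : ∀ i, Submodule R (M i)} :
    IsRelDense R K (⨆ i, (N i).map (DirectSum.lof R Λ M i)) ↔ ∀ i, IsRelDense R K (N i) := by
  classical
  refine ⟨fun hN i => comap_lof_iSup_map_lof N i ▸ hN.comap (DirectSum.lof R Λ M i),
    fun hN m x hx => ?_⟩
  obtain ⟨r, hrm, hrx⟩ :=
    IsRelDense.exists_forall_mem_finset (s := DFinsupp.support m) (fun i _ => hN i) m hx
  refine ⟨r, (mem_iSup_map_lof_iff_s14 N).mpr fun i => ?_, hrx⟩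
  rw [DirectSum.smul_apply]
  by_cases hi : i ∈ DFinsupp.support m
  · exact hrm i hi
  · rw [DFinsupp.notMem_support_iff.mp hi, smul_zero]
    exact zero_mem _

end RelDense

theorem stmt14_general (R : Type*) [Ring R] {Λ Γ : Type*} [DecidableEq Λ]
    {M : Λ → Type*} [∀ i, AddCommGroup (M i)] [∀ i, Module R (M i)]
    {K : Γ → Type*} [∀ j, AddCommGroup (K j)] [∀ j, Module R (K j)]
    (N : ∀ i, Submodule R (M i)) :
    IsRelDense R (⨁ j, K j) (⨆ i, (N i).map (DirectSum.lof R Λ M i)) ↔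
      ∀ i j, IsRelDense R (K j) (N i) :=
  isRelDense_iSup_map_lof_iff.trans (forall_congr' fun _ => isRelDense_directSum_iff)

/-- For submodules `N i ≤ M i`, the direct sum `⨁ i, N i` is
dense in `⨁ i, M i` iff `N i` is `M j`-dense in `M i` for all `i, j`. -/
theorem stmt14 (R : Type*) [Ring R] (Λ : Type*) [DecidableEq Λ]
    (M : Λ → Type*) [∀ i, AddCommGroup (M i)] [∀ i, Module R (M i)]
    (N : ∀ i, Submodule R (M i)) :
    IsDenseSub R (⨆ k, Submodule.map (DirectSum.lof R Λ M k) (N k) :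
        Submodule R (DirectSum Λ M)) ↔
      ∀ i j, IsRelDense R (M j) (N i) :=
  isDenseSub_iff_isRelDense.trans (stmt14_general R N)
end

section
/- Let {M_k}_{k∈Λ} be a family of rationally complete right R-modules. If either R is right noetherian or Λ is a finite index set, then M = ⊕_{k∈Λ} M_k is rationally complete. -/
/- Right `R`-modules are rendered as left `R`-modules (i.e. we work over the
opposite ring), so "`x·r`" becomes "`r • x`" and "right noetherian" becomes
`IsNoetherianRing R`. -/

universe u

/-!
A rationally complete module `A` is injective relative to the embeddings `f : N → V` whose range is
dense *relative to `A`*, i.e. dense with the test element `y ≠ 0` taken from `A`. To see this, push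
`f` out along `N → A` and divide by the torsion submodule of the torsion theory cogenerated by the
injective hull of `A`; the result is a dense extension of `A`, hence equal to `A`.

A dense extension `V` of `⨁ k, M k` is dense relative to every `M k`, so the projections extend to
`p k : V → M k`, which together embed `V` into `∏ k, M k`. It remains to see that `(p k x)` has
finite support for each `x : V`. For noetherian `R`, every `r` in the ideal of those `r` with
`r • x ∈ ⨁ k, M k` kills all but finitely many `p k x`, so a finite set of generators of this ideal
kills `p k x` for almost all `k`, while by density the ideal annihilates no nonzero element of any
`M k`.
-/

/-- `N` is dense in `V` relative to `A`. When `V` and `A` coincide this is `IsDenseSub`; in general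
it amounts to `Hom(V ⧸ N, E(A)) = 0`, where `E(A)` is the injective hull of `A`. It is the class of
submodules from which maps into a rationally complete module `A` extend. -/
def IsDenseRel {R : Type*} [Ring R] (A : Type*) [AddCommGroup A] [Module R A] {V : Type*}
    [AddCommGroup V] [Module R V] (N : Submodule R V) : Prop :=
  ∀ (x : V) (y : A), y ≠ 0 → ∃ r : R, r • x ∈ N ∧ r • y ≠ 0

section Density

variable {R A B N V : Type*} [Ring R] [AddCommGroup A] [Module R A] [AddCommGroup B] [Module R B]
  [AddCommGroup N] [Module R N] [AddCommGroup V] [Module R V]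

theorem IsDenseSub.isDenseRel_of_injective {P : Submodule R V} (hP : IsDenseSub R P)
    {i : A →ₗ[R] V} (hi : Function.Injective i) : IsDenseRel A P := by
  intro x y hy
  obtain ⟨r, hrx, hry⟩ := hP x (i y) ((map_ne_zero_iff i hi).2 hy)
  rw [← map_smul, map_ne_zero_iff i hi] at hry
  exact ⟨r, hrx, hry⟩

theorem IsDenseSub.injective_of_comp_injective {f : N →ₗ[R] V} (hd : IsDenseSub R f.range)
    {p : V →ₗ[R] B} (h : Function.Injective (p ∘ₗ f)) : Function.Injective p := by
  rw [injective_iff_map_eq_zero]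
  intro y hpy
  by_contra hy
  obtain ⟨r, ⟨n, hn⟩, hry⟩ := hd y y hy
  have hn0 : n = 0 := (map_eq_zero_iff (p ∘ₗ f) h).1 <| by
    rw [LinearMap.comp_apply, hn, map_smul, hpy, smul_zero]
  exact hry (by rw [← hn, hn0, map_zero])

end Density

section RelTorsion

variable (R A W : Type*) [Ring R] [AddCommGroup A] [Module R A] [AddCommGroup W] [Module R W]

/-- The torsion submodule of `W` for the hereditary torsion theory cogenerated by the injective hull
`E(A)`, used to make `A` dense in a quotient of `W`. It consists of the `w` with
`Hom(R w, E(A)) = 0`; this is expressed elementwise, to avoid injective hulls, by saying that the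
zero submodule is dense in `R w` relative to `A`. -/
def relTorsion : Submodule R W where
  carrier := {w | ∀ (a : R) (z : A), z ≠ 0 → ∃ r : R, r • a • w = 0 ∧ r • z ≠ 0}
  zero_mem' a z hz := ⟨1, by simp only [smul_zero], by rwa [one_smul]⟩
  add_mem' {v w} hv hw a z hz := by
    obtain ⟨r, hrv, hrz⟩ := hv a z hz
    obtain ⟨s, hsw, hsz⟩ := hw (r * a) (r • z) hrz
    refine ⟨s * r, ?_, by rwa [mul_smul]⟩
    rw [mul_smul, smul_add, smul_add, hrv, zero_add, ← mul_smul r, hsw]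
  smul_mem' b w hw a z hz := by
    simpa only [mul_smul] using hw (a * b) z hz

variable {R A W}

theorem exists_forall_smul_eq_zero_of_notMem_relTorsion {w : W} (hw : w ∉ relTorsion R A W) :
    ∃ (a : R) (z : A), z ≠ 0 ∧ ∀ r : R, r • a • w = 0 → r • z = 0 := by
  by_contra! h
  exact hw h

theorem eq_zero_of_map_mem_relTorsion {g : A →ₗ[R] W} (hg : Function.Injective g) {z : A}
    (hz : g z ∈ relTorsion R A W) : z = 0 := by
  by_contra hz0
  obtain ⟨r, hrg, hrz⟩ := hz 1 z hz0
  rw [one_smul, ← map_smul, map_eq_zero_iff g hg] at hrg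
  exact hrz hrg

theorem mkQ_relTorsion_comp_injective {g : A →ₗ[R] W} (hg : Function.Injective g) :
    Function.Injective ((relTorsion R A W).mkQ ∘ₗ g) := by
  rw [injective_iff_map_eq_zero]
  intro z hz
  exact eq_zero_of_map_mem_relTorsion hg ((Submodule.Quotient.mk_eq_zero _).1 hz)

theorem IsDenseRel.isDenseSub_range_mkQ_relTorsion_comp {g : A →ₗ[R] W}
    (hg : Function.Injective g) (hd : IsDenseRel A g.range) :
    IsDenseSub R ((relTorsion R A W).mkQ ∘ₗ g).range := by
  intro x y hy
  obtain ⟨x, rfl⟩ := Submodule.mkQ_surjective _ x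
  obtain ⟨y, rfl⟩ := Submodule.mkQ_surjective _ y
  have hyT : y ∉ relTorsion R A W := fun h => hy ((Submodule.Quotient.mk_eq_zero _).2 h)
  obtain ⟨a, z, hz, hann⟩ := exists_forall_smul_eq_zero_of_notMem_relTorsion hyT
  obtain ⟨r, ⟨b, hb⟩, hrz⟩ := hd (a • y) z hz
  have hb0 : b ≠ 0 := by
    rintro rfl
    exact hrz (hann r (by rw [← hb, map_zero]))
  obtain ⟨s, ⟨c, hc⟩, hsb⟩ := hd (r • a • x) b hb0
  refine ⟨s * r * a, ⟨c, ?_⟩, fun h => hsb ?_⟩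
  · rw [LinearMap.comp_apply, hc, ← map_smul, mul_smul, mul_smul]
  · rw [← map_smul, mul_smul, mul_smul, ← hb, ← map_smul g] at h
    exact eq_zero_of_map_mem_relTorsion hg ((Submodule.Quotient.mk_eq_zero _).1 h)

end RelTorsion

namespace RationallyComplete

variable {R A V : Type u} [Ring R] [AddCommGroup A] [Module R A] [AddCommGroup V] [Module R V]

theorem exists_leftInverse (hA : RationallyComplete R A) {g : A →ₗ[R] V}
    (hg : Function.Injective g) (hd : IsDenseRel A g.range) :
    ∃ p : V →ₗ[R] A, p ∘ₗ g = LinearMap.id := by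
  have hinj := mkQ_relTorsion_comp_injective hg
  let e := LinearEquiv.ofBijective ((relTorsion R A V).mkQ ∘ₗ g)
    ⟨hinj, hA _ _ hinj (hd.isDenseSub_range_mkQ_relTorsion_comp hg)⟩
  exact ⟨e.symm ∘ₗ (relTorsion R A V).mkQ, LinearMap.ext e.symm_apply_apply⟩

theorem exists_extension (hA : RationallyComplete R A) {N : Type*} [AddCommGroup N] [Module R N]
    {f : N →ₗ[R] V} (hf : Function.Injective f) (hd : IsDenseRel A f.range) (π : N →ₗ[R] A) :
    ∃ p : V →ₗ[R] A, p ∘ₗ f = π := by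
  -- The quotient of `A × V` by `K` is the pushout of `π` and `f`.
  let K : Submodule R (A × V) := (π.prod (-f)).range
  let g : A →ₗ[R] (A × V) ⧸ K := K.mkQ ∘ₗ LinearMap.inl R A V
  let h : V →ₗ[R] (A × V) ⧸ K := K.mkQ ∘ₗ LinearMap.inr R A V
  have hcomm (n : N) : h (f n) = g (π n) := by
    refine ((Submodule.Quotient.eq K).2 ⟨n, ?_⟩).symm
    ext <;> simp
  have hg : Function.Injective g := by
    rw [injective_iff_map_eq_zero]
    intro a ha
    obtain ⟨n, hn⟩ := (Submodule.Quotient.mk_eq_zero K).1 ha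
    obtain ⟨hπn, hfn⟩ : π n = a ∧ -f n = 0 := Prod.ext_iff.1 hn
    rw [← hπn, (map_eq_zero_iff f hf).1 (neg_eq_zero.1 hfn), map_zero]
  have hgd : IsDenseRel A g.range := by
    intro w z hz
    obtain ⟨⟨a, v⟩, rfl⟩ := K.mkQ_surjective w
    obtain ⟨r, ⟨n, hn⟩, hrz⟩ := hd v z hz
    have hsplit : K.mkQ (a, v) = g a + h v := by
      simp only [g, h, LinearMap.comp_apply, ← map_add, LinearMap.inl_apply, LinearMap.inr_apply,
        Prod.mk_add_mk, add_zero, zero_add]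
    refine ⟨r, ⟨r • a + π n, ?_⟩, hrz⟩
    rw [hsplit, map_add, ← hcomm, hn, map_smul, map_smul, smul_add]
  obtain ⟨q, hq⟩ := hA.exists_leftInverse hg hgd
  refine ⟨q ∘ₗ h, LinearMap.ext fun n => ?_⟩
  rw [LinearMap.comp_apply, LinearMap.comp_apply, hcomm]
  exact LinearMap.congr_fun hq (π n)

end RationallyComplete

theorem finite_setOf_apply_ne_zero_of_fg_colon {R V Λ : Type*} [Ring R] [AddCommGroup V]
    [Module R V] {M : Λ → Type*} [∀ k, AddCommGroup (M k)] [∀ k, Module R (M k)]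
    {N : Submodule R V} (hd : ∀ k, IsDenseRel (M k) N) {p : ∀ k, V →ₗ[R] M k}
    (hp : ∀ v ∈ N, {k | p k v ≠ 0}.Finite) {x : V} (hx : (N.colon {x}).FG) :
    {k | p k x ≠ 0}.Finite := by
  obtain ⟨S, hS⟩ := hx
  have hSN (r : R) (hr : r ∈ S) : r • x ∈ N :=
    Submodule.mem_colon_singleton.1 (hS ▸ Submodule.subset_span hr)
  refine (S.finite_toSet.biUnion fun r hr => hp _ (hSN r hr)).subset fun k hk => ?_
  by_contra hkS
  have hSk : ∀ r ∈ S, r • p k x = 0 := by simpa using hkS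
  have hann : N.colon {x} ≤ Ideal.torsionOf R (M k) (p k x) :=
    hS ▸ Submodule.span_le.2 hSk
  obtain ⟨r, hrx, hr⟩ := hd k x (p k x) hk
  exact hr (hann (Submodule.mem_colon_singleton.2 hrx))

/-- If each `M k` is rationally complete and `R` is
noetherian or `Λ` is finite, then `⨁ k, M k` is rationally complete. -/
theorem stmt16 (R : Type u) [Ring R] (Λ : Type u)
    (M : Λ → Type u) [∀ k, AddCommGroup (M k)] [∀ k, Module R (M k)]
    (hrc : ∀ k, RationallyComplete R (M k))
    (hyp : IsNoetherianRing R ∨ Finite Λ) :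
    RationallyComplete R (DirectSum Λ M) := by
  classical
  intro V _ _ f hf hd
  have hdk (k : Λ) : IsDenseRel (M k) f.range :=
    hd.isDenseRel_of_injective (i := f ∘ₗ DirectSum.lof R Λ M k)
      (hf.comp (DirectSum.of_injective k))
  choose p hp using fun k => (hrc k).exists_extension hf (hdk k) (DirectSum.component R Λ M k)
  have hpf (k : Λ) (m : DirectSum Λ M) : p k (f m) = m k := LinearMap.congr_fun (hp k) m
  have hpinj : Function.Injective (LinearMap.pi p) :=
    hd.injective_of_comp_injective fun m n hmn =>
      DFinsupp.ext fun k => by simpa [hpf] using congrFun hmn k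
  intro x
  have hfin : {k | p k x ≠ 0}.Finite := by
    rcases hyp with hR | hΛ
    · refine finite_setOf_apply_ne_zero_of_fg_colon hdk ?_ (IsNoetherian.noetherian _)
      rintro _ ⟨m, rfl⟩
      simpa only [hpf] using DFinsupp.finite_support m
    · exact Set.toFinite _
  refine ⟨DirectSum.mk M hfin.toFinset fun k => p k x, hpinj (funext fun k => ?_)⟩
  rw [LinearMap.pi_apply, LinearMap.pi_apply, hpf]
  by_cases hk : p k x = 0
  · rw [DirectSum.mk_apply_of_notMem (by simpa using hk), hk]
  · rw [DirectSum.mk_apply_of_mem (by simpa using hk)]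
end

section
/- Let H be a right ring of quotients of a ring R and let M be a right H-module (viewed also as a right R-module by restriction). If R is M-dense in H as right R-modules, then End_R(M) = End_H(M), i.e. every R-linear endomorphism of M is H-linear. -/
/- Right modules and right rings of quotients are rendered on the left (i.e. we
work over the opposite rings): `H` is a left ring of quotients of its subring
`i(R)`, `M` is a left `H`-module, and "`R` is `M`-dense in `H`" reads: for all
`h ∈ H` and nonzero `m ∈ M` there is `r ∈ R` with `i(r)·h ∈ i(R)` and
`i(r) • m ≠ 0`. -/

section RelativeDensity

variable {H M K : Type*} [Monoid H] [MulAction H M] [AddGroup K] [DistribMulAction H K]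
  {S : Set H}

/-- `S` is `K`-dense in `H`. When `S` is a subring of `H` and `K` is an `H`-module, this is the
module-theoretic `K`-density of the `S`-submodule `S` of `H`. Only the multiplication of `H` enters
it, so it is stated for a subset of a monoid acting on `K` by additive maps. -/
def IsDenseFor (S : Set H) (K : Type*) [AddGroup K] [DistribMulAction H K] : Prop :=
  ∀ (h : H) (x : K), x ≠ 0 → ∃ s ∈ S, s * h ∈ S ∧ s • x ≠ 0

theorem isDenseFor_range {R : Type*} {i : R → H} :
    IsDenseFor (Set.range i) K ↔
      ∀ (h : H) (x : K), x ≠ 0 → ∃ r : R, (∃ s : R, i r * h = i s) ∧ i r • x ≠ 0 := by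
  simp only [IsDenseFor, Set.mem_range, exists_exists_eq_and, eq_comm (b := i _ * _)]

theorem IsDenseFor.eq_of_smul_eq (hS : IsDenseFor S K) (h : H) {x y : K}
    (hxy : ∀ s ∈ S, s * h ∈ S → s • x = s • y) : x = y := by
  by_contra hne
  obtain ⟨s, hs, hsh, hsmul⟩ := hS h (x - y) (sub_ne_zero.2 hne)
  exact hsmul (by rw [smul_sub, hxy s hs hsh, sub_self])

theorem smul_map_smul_of_map_mul_smul {N : Type*} [MulAction H N] {φ : M → N} {s h : H} {m : M}
    (hs : φ (s • h • m) = s • φ (h • m)) (hsh : φ ((s * h) • m) = (s * h) • φ m) :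
    s • φ (h • m) = s • h • φ m :=
  calc
    s • φ (h • m) = φ (s • h • m) := hs.symm
    _ = φ ((s * h) • m) := by rw [mul_smul]
    _ = (s * h) • φ m := hsh
    _ = s • h • φ m := mul_smul s h (φ m)

theorem stmt17_general (hS : IsDenseFor S K) {φ : M → K}
    (hφ : ∀ s ∈ S, ∀ m : M, φ (s • m) = s • φ m) (h : H) (m : M) :
    φ (h • m) = h • φ m :=
  hS.eq_of_smul_eq h fun s hs hsh =>
    smul_map_smul_of_map_mul_smul (hφ s hs (h • m)) (hφ (s * h) hsh m)

end RelativeDensity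

/-- Let `H` be a ring of quotients of `R` (embedded via the
injective ring map `i`) and `M` an `H`-module. If `R` is `M`-dense in `H`,
then `End_R(M) = End_H(M)`: every additive endomorphism of `M` commuting with
the `R`-action commutes with the `H`-action. -/
theorem stmt17 (R H : Type*) [Ring R] [Ring H] (i : R →+* H)
    (hi : Function.Injective i)
    (hq : ∀ x y : H, x ≠ 0 → ∃ r : R, i r * x ≠ 0 ∧ ∃ s : R, i r * y = i s)
    (M : Type*) [AddCommGroup M] [Module H M]
    (hdense : ∀ (h : H) (m : M), m ≠ 0 →
      ∃ r : R, (∃ s : R, i r * h = i s) ∧ i r • m ≠ 0) :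
    ∀ φ : M →+ M, (∀ (r : R) (m : M), φ (i r • m) = i r • φ m) →
      ∀ (h : H) (m : M), φ (h • m) = h • φ m := fun _ hφ =>
  stmt17_general (isDenseFor_range.2 hdense) (Set.forall_mem_range.2 hφ)
end
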